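/- Let G₂ be a bipartite graph with Hamilton path P = u₁u₂⋯u_s, u₁ ∈ X, and suppose G₂ contains no cycle of length at least 2t (t ≥ 3). Let C be an even cycle of length 2m ≥ 6 in a graph G with V(C) ∩ V(G₂) = ∅, and suppose u₁ is adjacent (in G) to all m vertices of V(C) ∩ Y except possibly none, i.e., d(u₁, C) = m. Let x* ∈ V(C) ∩ X be a vertex such that u_s is adjacent to all vertices of (V(C) ∩ X) \ {x*}; note then u₁x* ∉ E(G) is not required, but x* is not adjacent to u₁ since u₁ ∈ X. If x* has at least t neighbors on P, then G[V(P) ∪ V(C)] contains two vertex-disjoint cycles: one of length at least 2t contained in (V(P) ∪ {x*}) \ {u₁}, and one of length exactly 2m on (V(C) ∪ {u₁}) \ {x*}. -/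

import Mathlib

/-!
In a bipartite graph the neighbours of `x*` occur on `P` at positions of equal parity. As `x*` has
at least `t` neighbours on `P`, the first and the last of them are at least `2(t - 1)` steps apart,
and the segment of `P` between them closes up through `x*` to a cycle of length at least `2t`. This
cycle avoids `u₁`: the two neighbours of `x*` on `C` are adjacent to `u₁`, so an edge between `x*`
and `u₁` would create a triangle. The same two adjacencies let `u₁` replace `x*` on `C`.
-/

theorem exists_add_mul_card_le_of_modEq {k : ℕ} {S : Finset ℕ} (hS : S.Nonempty)
    (hmod : ∀ i ∈ S, ∀ j ∈ S, i ≡ j [MOD k]) :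
    ∃ i ∈ S, ∃ j ∈ S, i + k * S.card ≤ j + k := by
  set i := S.min' hS
  set j := S.max' hS
  have hi : i ∈ S := S.min'_mem hS
  have hij : i ≤ j := S.min'_le_max' hS
  refine ⟨i, hi, j, S.max'_mem hS, ?_⟩
  have hsub : S ⊆ (Finset.range ((j - i) / k + 1)).image (fun a ↦ i + k * a) := by
    intro n hn
    have hin : i ≤ n := S.min'_le n hn
    have hdvd : k ∣ n - i := (Nat.modEq_iff_dvd' hin).1 (hmod i hi n hn)
    have hle : (n - i) / k ≤ (j - i) / k :=
      Nat.div_le_div_right (Nat.sub_le_sub_right (S.le_max' n hn) i)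
    refine Finset.mem_image.2 ⟨(n - i) / k, Finset.mem_range_succ_iff.2 hle, ?_⟩
    rw [Nat.mul_div_cancel' hdvd, Nat.add_sub_cancel' hin]
  have hcard : S.card ≤ (j - i) / k + 1 := by
    simpa only [Finset.card_range] using (Finset.card_le_card hsub).trans Finset.card_image_le
  calc i + k * S.card ≤ i + k * ((j - i) / k + 1) := by gcongr
    _ = i + k * ((j - i) / k) + k := by ring
    _ ≤ i + (j - i) + k := by gcongr; exact Nat.mul_div_le (j - i) k
    _ = j + k := by rw [Nat.add_sub_cancel' hij]

section Cycles

open SimpleGraph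

variable {V : Type*} {G : SimpleGraph V} {u v w x : V}

theorem exists_isCycle_through_of_isPath {q : G.Walk v w} (hq : q.IsPath) (hlen : 0 < q.length)
    (hx : x ∉ q.support) (hxv : G.Adj x v) (hwx : G.Adj w x) :
    ∃ d : G.Walk x x, d.IsCycle ∧ d.length = q.length + 2 ∧
      ∀ z ∈ d.support, z = x ∨ z ∈ q.support := by
  refine ⟨.cons hxv (q.concat hwx), ?_, ?_, ?_⟩
  · have hpath : (q.concat hwx).IsPath := hq.concat hx hwx
    refine (Walk.cons_isCycle_iff _ hxv).2 ⟨hpath, fun hedge ↦ ?_⟩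
    have hvw : v = w :=
      (hpath.eq_penultimate_of_mem_edges hedge).trans (q.penultimate_concat hwx)
    exact hlen.ne' (Walk.length_eq_zero_iff.2 (hq.nil_iff_eq.2 hvw))
  · rw [Walk.length_cons, Walk.length_concat]
  · intro z hz
    simp only [Walk.support_cons, Walk.support_concat, List.mem_cons, List.mem_append,
      List.not_mem_nil, or_false] at hz
    tauto

theorem exists_isPath_between_getVert {p : G.Walk u v} (hp : p.IsPath) {i j : ℕ} (hij : i ≤ j)
    (hj : j ≤ p.length) :
    ∃ q : G.Walk (p.getVert i) (p.getVert j),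
      q.IsPath ∧ q.length = j - i ∧ q.support ⊆ p.support := by
  have hend : (p.drop i).getVert (j - i) = p.getVert j := by
    rw [Walk.drop_getVert, Nat.add_sub_cancel' hij]
  refine ⟨((p.drop i).take (j - i)).copy rfl hend, ?_, ?_, ?_⟩
  · rw [Walk.isPath_copy]
    exact (hp.drop i).take (j - i)
  · rw [Walk.length_copy, Walk.take_length, Walk.drop_length]
    lia
  · rw [Walk.support_copy]
    exact ((Walk.isSubwalk_take _ _).trans (p.isSubwalk_drop i)).support_subset

theorem modEq_two_of_adj_getVert (hG : G.IsBipartite) (p : G.Walk u v) {i j : ℕ}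
    (hi : i ≤ p.length) (hj : j ≤ p.length) (hxi : G.Adj x (p.getVert i))
    (hxj : G.Adj x (p.getVert j)) : i ≡ j [MOD 2] := by
  have heven := two_colorable_iff_forall_loop_even.1 hG x
    (.cons hxi (((p.take i).reverse.append (p.take j)).concat hxj.symm))
  rw [Walk.length_cons, Walk.length_concat, Walk.length_append, Walk.length_reverse,
    Walk.take_length, Walk.take_length, min_eq_left hi, min_eq_left hj] at heven
  rw [Nat.ModEq]
  grind

theorem not_adj_of_common_neighbor (hG : G.IsBipartite) (hu : G.Adj u w) (hx : G.Adj x w) :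
    ¬G.Adj x u := by
  intro h
  have heven := two_colorable_iff_forall_loop_even.1 hG x (.cons h (.cons hu (.cons hx.symm .nil)))
  simp only [Walk.length_cons, Walk.length_nil] at heven
  exact absurd heven (by decide)

theorem ncard_neighbors_on_walk_le (p : G.Walk u v) (x : V) [DecidablePred (G.Adj x)] :
    {z | z ∈ p.support ∧ G.Adj x z}.ncard ≤
      ((Finset.range (p.length + 1)).filter (fun i ↦ G.Adj x (p.getVert i))).card := by
  classical
  set S := (Finset.range (p.length + 1)).filter (fun i ↦ G.Adj x (p.getVert i))
  have hsub : {z | z ∈ p.support ∧ G.Adj x z} ⊆ (S.image p.getVert : Finset V) := by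
    rintro z ⟨hz, hxz⟩
    obtain ⟨n, rfl, hn⟩ := Walk.mem_support_iff_exists_getVert.1 hz
    exact Finset.mem_coe.2 <| Finset.mem_image_of_mem _ <|
      Finset.mem_filter.2 ⟨Finset.mem_range_succ_iff.2 hn, hxz⟩
  calc {z | z ∈ p.support ∧ G.Adj x z}.ncard
      ≤ (S.image p.getVert : Set V).ncard := Set.ncard_le_ncard hsub (Finset.finite_toSet _)
    _ = (S.image p.getVert).card := Set.ncard_coe_finset _
    _ ≤ S.card := Finset.card_image_le

theorem exists_isCycle_of_le_ncard_neighbors (hG : G.IsBipartite) {p : G.Walk u v} (hp : p.IsPath)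
    (hx : x ∉ p.support) {t : ℕ} (ht : 2 ≤ t)
    (hcard : t ≤ {z | z ∈ p.support ∧ G.Adj x z}.ncard) :
    ∃ d : G.Walk x x, d.IsCycle ∧ 2 * t ≤ d.length ∧
      ∀ z ∈ d.support, z = x ∨ z ∈ p.support := by
  classical
  set S := (Finset.range (p.length + 1)).filter (fun i ↦ G.Adj x (p.getVert i))
  have htS : t ≤ S.card := hcard.trans (ncard_neighbors_on_walk_le p x)
  have hmem : ∀ i ∈ S, i ≤ p.length ∧ G.Adj x (p.getVert i) := fun i hi ↦
    (Finset.mem_filter.1 hi).imp_left Finset.mem_range_succ_iff.1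
  have hmod : ∀ i ∈ S, ∀ j ∈ S, i ≡ j [MOD 2] := fun i hi j hj ↦
    modEq_two_of_adj_getVert hG p (hmem i hi).1 (hmem j hj).1 (hmem i hi).2 (hmem j hj).2
  obtain ⟨i, hi, j, hj, hgap⟩ :=
    exists_add_mul_card_le_of_modEq (Finset.card_pos.1 (by lia)) hmod
  have hij : i ≤ j := by lia
  obtain ⟨q, hq, hqlen, hqp⟩ := exists_isPath_between_getVert hp hij (hmem j hj).1
  obtain ⟨d, hd, hdlen, hdsupp⟩ := exists_isCycle_through_of_isPath hq (by lia)
    (fun h ↦ hx (hqp h)) (hmem i hi).2 (hmem j hj).2.symm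
  exact ⟨d, hd, by lia, fun z hz ↦ (hdsupp z hz).imp_right (@hqp z)⟩

theorem exists_isCycle_avoiding_start_of_le_ncard_neighbors (hG : G.IsBipartite) {p : G.Walk u v}
    (hp : p.IsPath) (hx : x ∉ p.support) (hxu : ¬G.Adj x u) {t : ℕ} (ht : 2 ≤ t)
    (hcard : t ≤ {z | z ∈ p.support ∧ G.Adj x z}.ncard) :
    ∃ d : G.Walk x x, d.IsCycle ∧ 2 * t ≤ d.length ∧
      ∀ z ∈ d.support, (z ∈ p.support ∨ z = x) ∧ z ≠ u := by
  cases p with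
  | nil =>
    have hempty : {z | z ∈ (Walk.nil : G.Walk u u).support ∧ G.Adj x z} = ∅ := by
      ext z
      simp only [Walk.support_nil, List.mem_singleton, Set.mem_ofPred_eq, Set.mem_empty_iff_false,
        iff_false]
      rintro ⟨rfl, h⟩
      exact hxu h
    rw [hempty, Set.ncard_empty] at hcard
    lia
  | cons h p =>
    obtain ⟨hp, hup⟩ := (Walk.cons_isPath_iff h p).1 hp
    simp only [Walk.support_cons, List.mem_cons, not_or] at hx hcard ⊢
    have hset : {z | (z = u ∨ z ∈ p.support) ∧ G.Adj x z} = {z | z ∈ p.support ∧ G.Adj x z} := by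
      ext z
      exact and_congr_left fun hxz ↦ or_iff_right fun hzu ↦ hxu (hzu ▸ hxz)
    obtain ⟨d, hd, hdlen, hdsupp⟩ :=
      exists_isCycle_of_le_ncard_neighbors hG hp hx.2 ht (hset ▸ hcard)
    refine ⟨d, hd, hdlen, fun z hz ↦ ?_⟩
    rcases hdsupp z hz with rfl | hzp
    · exact ⟨.inr rfl, hx.1⟩
    · exact ⟨.inl (.inr hzp), fun hzu ↦ hup (hzu ▸ hzp)⟩

theorem exists_isPath_avoiding_of_isCycle {c : G.Walk v v} (hc : c.IsCycle) (hx : x ∈ c.support) :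
    ∃ (a b : V) (r : G.Walk a b), r.IsPath ∧ r.length + 2 = c.length ∧ r.support ⊆ c.support ∧
      x ∉ r.support ∧ G.Adj x a ∧ G.Adj b x := by
  classical
  set e := c.rotate x hx
  have he : e.IsCycle := hc.rotate hx
  have hetail : ¬e.tail.Nil := by
    have := e.length_tail_add_one he.not_nil
    have := he.three_le_length
    rw [← Walk.length_eq_zero_iff]
    lia
  have hadj : G.Adj e.tail.penultimate x := e.tail.adj_penultimate hetail
  have hpath : (e.tail.dropLast.concat hadj).IsPath := by
    rw [Walk.concat_dropLast]
    exact he.isPath_tail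
  obtain ⟨hr, hxr⟩ := (Walk.concat_isPath_iff hadj).1 hpath
  refine ⟨_, _, e.tail.dropLast, hr, ?_, ?_, hxr, e.adj_snd he.not_nil, hadj⟩
  · rw [← c.length_rotate x hx, ← Walk.length_tail_add_one he.not_nil,
      ← Walk.length_dropLast_add_one hetail]
  · intro z hz
    have hsub : e.tail.dropLast.support ⊆ e.support :=
      ((e.tail.isSubwalk_take _).trans (e.isSubwalk_drop 1)).support_subset
    exact (c.mem_support_rotate_iff x hx).1 (hsub hz)

theorem exists_isCycle_replacing_vertex {c : G.Walk v v} (hc : c.IsCycle) (hx : x ∈ c.support)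
    (hu : u ∉ c.support) (hadj : ∀ z ∈ c.support, G.Adj x z → G.Adj u z) :
    ∃ d : G.Walk u u, d.IsCycle ∧ d.length = c.length ∧
      ∀ z ∈ d.support, (z ∈ c.support ∨ z = u) ∧ z ≠ x := by
  obtain ⟨a, b, r, hr, hrlen, hrc, hxr, hxa, hbx⟩ := exists_isPath_avoiding_of_isCycle hc hx
  have hua : G.Adj u a := hadj a (hrc r.start_mem_support) hxa
  have hbu : G.Adj b u := (hadj b (hrc r.end_mem_support) hbx.symm).symm
  have hrpos : 0 < r.length := by
    have := hc.three_le_length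
    lia
  obtain ⟨d, hd, hdlen, hdsupp⟩ :=
    exists_isCycle_through_of_isPath hr hrpos (fun h ↦ hu (hrc h)) hua hbu
  refine ⟨d, hd, hdlen.trans hrlen, fun z hz ↦ ?_⟩
  rcases hdsupp z hz with rfl | hzr
  · exact ⟨.inr rfl, fun hzx ↦ hu (hzx ▸ hx)⟩
  · exact ⟨.inl (hrc hzr), fun hzx ↦ hxr (hzx ▸ hzr)⟩

theorem two_disjoint_cycles_by_exchange_general (hG : G.IsBipartite) {t : ℕ} (ht : 2 ≤ t)
    {p : G.Walk u v} (hp : p.IsPath) {c : G.Walk w w} (hc : c.IsCycle)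
    (hpc : ∀ z ∈ p.support, z ∉ c.support) (hx : x ∈ c.support)
    (hadj : ∀ z ∈ c.support, G.Adj x z → G.Adj u z)
    (hcard : t ≤ {z | z ∈ p.support ∧ G.Adj x z}.ncard) :
    ∃ (d₁ : G.Walk x x) (d₂ : G.Walk u u),
      d₁.IsCycle ∧ 2 * t ≤ d₁.length ∧
      (∀ z ∈ d₁.support, (z ∈ p.support ∨ z = x) ∧ z ≠ u) ∧
      d₂.IsCycle ∧ d₂.length = c.length ∧
      (∀ z ∈ d₂.support, (z ∈ c.support ∨ z = u) ∧ z ≠ x) ∧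
      ∀ z ∈ d₁.support, z ∉ d₂.support := by
  have hxu : ¬G.Adj x u := by
    obtain ⟨a, _, r, -, -, hrc, -, hxa, -⟩ := exists_isPath_avoiding_of_isCycle hc hx
    exact not_adj_of_common_neighbor hG (hadj a (hrc r.start_mem_support) hxa) hxa
  obtain ⟨d₁, hd₁, hlen₁, hsupp₁⟩ := exists_isCycle_avoiding_start_of_le_ncard_neighbors hG hp
    (fun hxp ↦ hpc x hxp hx) hxu ht hcard
  obtain ⟨d₂, hd₂, hlen₂, hsupp₂⟩ :=
    exists_isCycle_replacing_vertex hc hx (hpc u p.start_mem_support) hadj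
  refine ⟨d₁, d₂, hd₁, hlen₁, hsupp₁, hd₂, hlen₂, hsupp₂, fun z hz₁ hz₂ ↦ ?_⟩
  have hzp : z ∈ p.support := (hsupp₁ z hz₁).1.resolve_right (hsupp₂ z hz₂).2
  have hzc : z ∈ c.support := (hsupp₂ z hz₂).1.resolve_right (hsupp₁ z hz₁).2
  exact hpc z hzp hzc

end Cycles

/-- Let G be bipartite with parts X, Y. Let G₂ be the subgraph induced
on the support of a Hamilton path P = u₁⋯u_s of G₂ (u₁ ∈ X), containing no cycle of
length at least 2t (t ≥ 3). Let C be an even cycle of length 2m ≥ 6 in G, disjoint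
from P, with u₁ adjacent to every Y-vertex of C. Let x* be an X-vertex of C such
that u_s is adjacent to all X-vertices of C except x*. If x* has at least t
neighbors on P, then G[V(P) ∪ V(C)] contains two vertex-disjoint cycles: one of
length at least 2t with vertices in (V(P) ∪ {x*}) \ {u₁}, and one of length exactly
2m with vertices in (V(C) ∪ {u₁}) \ {x*}. -/
theorem two_disjoint_cycles_by_exchange {V : Type*} [DecidableEq V]
    (G : SimpleGraph V) [DecidableRel G.Adj]
    (X Y : Finset V) (hdisj : Disjoint X Y) (hcover : ∀ z : V, z ∈ X ∨ z ∈ Y)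
    (hbip : ∀ a b, G.Adj a b → (a ∈ X ∧ b ∈ Y) ∨ (a ∈ Y ∧ b ∈ X))
    (t : ℕ) (ht : 3 ≤ t) (m : ℕ) (hm : 3 ≤ m)
    {u₁ uₛ : V} (p : G.Walk u₁ uₛ) (hp : p.IsPath) (hu₁X : u₁ ∈ X)
    (hnocycle : ∀ (w : V) (d : G.Walk w w), d.IsCycle →
      (∀ x ∈ d.support, x ∈ p.support) → d.length < 2 * t)
    (v₀ : V) (c : G.Walk v₀ v₀) (hc : c.IsCycle) (hlen : c.length = 2 * m)
    (hpc : ∀ w, w ∈ p.support → w ∉ c.support)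
    (hu₁C : ∀ z ∈ c.support, z ∈ Y → G.Adj u₁ z)
    (xstar : V) (hx₁ : xstar ∈ c.support) (hx₂ : xstar ∈ X)
    (hus : ∀ z ∈ c.support, z ∈ X → z ≠ xstar → G.Adj uₛ z)
    (hxP : t ≤ (p.support.toFinset.filter (fun w => G.Adj xstar w)).card) :
    ∃ (w₁ : V) (d₁ : G.Walk w₁ w₁) (w₂ : V) (d₂ : G.Walk w₂ w₂),
      d₁.IsCycle ∧ 2 * t ≤ d₁.length ∧
      (∀ x ∈ d₁.support, (x ∈ p.support ∨ x = xstar) ∧ x ≠ u₁) ∧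
      d₂.IsCycle ∧ d₂.length = 2 * m ∧
      (∀ x ∈ d₂.support, (x ∈ c.support ∨ x = u₁) ∧ x ≠ xstar) ∧
      (∀ x ∈ d₁.support, x ∉ d₂.support) := by
  have hXY : G.IsBipartiteWith X Y := ⟨Finset.disjoint_coe.2 hdisj, hbip⟩
  obtain ⟨d₁, d₂, h⟩ := two_disjoint_cycles_by_exchange_general hXY.isBipartite (by lia : 2 ≤ t) hp
    hc hpc hx₁ (fun z hz hxz ↦ hu₁C z hz (hXY.mem_of_mem_adj hx₂ hxz))
    (by simpa only [← Set.ncard_coe_finset, Finset.coe_filter, List.mem_toFinset] using hxP)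
  exact ⟨xstar, d₁, u₁, d₂, hlen ▸ h⟩
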